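/- Let k ≥ 1 and let 𝒮 ⊆ {1, …, k}. For each i ∈ 𝒮 let d_i be a positive integer, and set n_i := 1, S_i := d_i, and D_i := d_i. For each i ∉ 𝒮 let n_i ≥ 2 be an integer and let d_{i,1}, …, d_{i,n_i} be positive integers, and set S_i := ∑_{j=1}^{n_i} d_{i,j} and D_i := ∏_{j=1}^{n_i} d_{i,j}. In ℤ[x_1, …, x_k], define P := ∏_{i ∈ 𝒮} (∑_{u ≠ i} x_u)^{d_i − 1} · ∏_{i ∉ 𝒮} ∏_{j=1}^{n_i} ( ∑_{l=0}^{d_{i,j} − 1} x_i^{l} · (x_1 + ⋯ + x_k)^{d_{i,j} − 1 − l} ). Then P does not belong to the ideal of ℤ[x_1, …, x_k] generated by x_1^{D_1}, …, x_k^{D_k} if and only if for every i ∈ 𝒮 one has 2·(d_i − 1) ≤ ∑_{l=1}^{k} (D_l − 1). -/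

import Mathlib

/-!
All coefficients of `P` are nonnegative, so no cancellation occurs and the support of `P` is the
Minkowski sum of the supports of its factors. Membership in the monomial ideal is a statement about
the support: `P` lies outside the ideal iff some monomial of `P` has every exponent of `x_u` at most
`D_u - 1`. Finding such a monomial is a transportation problem: each linear factor picks a variable,
`x_u` may be picked at most `D_u - 1` times, and the `d_i - 1` factors coming from `i ∈ 𝒮` may not
pick `x_i`. (A factor `∑_l x_i^l (∑ x)^(d-1-l)` contains `(∑ x)^(d-1)`, hence imposes no restriction.)

Hall's theorem (`exists_assignment`) solves it. A set of factors having two different origins in `𝒮`,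
or an origin outside `𝒮`, sees all the capacity, which suffices because
`∑_j (d_{i,j} - 1) ≤ ∏_j d_{i,j} - 1`; a set of factors with a single origin `i ∈ 𝒮` sees
`∑_{l ≠ i} (D_l - 1)`, which is at least `d_i - 1` by the assumed inequality. Conversely, if the
inequality fails at `i`, degree reasons put `(∑_{u ≠ i} x_u)^(d_i - 1)` itself in the ideal.
-/

open MvPolynomial Finset

/-- `PosAt p m`: all coefficients of `p` are nonnegative and that of the monomial `m` is positive. -/
def PosAt {σ : Type*} (p : MvPolynomial σ ℤ) (m : σ →₀ ℕ) : Prop :=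
  (∀ m', 0 ≤ coeff m' p) ∧ 0 < coeff m p

theorem PosAt.mul {σ : Type*} {p q : MvPolynomial σ ℤ} {m m' : σ →₀ ℕ}
    (hp : PosAt p m) (hq : PosAt q m') : PosAt (p * q) (m + m') := by
  classical
  refine ⟨fun a => ?_, ?_⟩
  · rw [coeff_mul]
    exact Finset.sum_nonneg fun x _ => mul_nonneg (hp.1 _) (hq.1 _)
  · rw [coeff_mul]
    refine Finset.sum_pos' (fun x _ => mul_nonneg (hp.1 _) (hq.1 _)) ⟨(m, m'), ?_, ?_⟩
    · simp
    · exact mul_pos hp.2 hq.2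

theorem PosAt.one {σ : Type*} : PosAt (1 : MvPolynomial σ ℤ) 0 := by
  classical
  refine ⟨fun m' => ?_, by simp⟩
  rw [coeff_one]; split_ifs <;> simp

theorem PosAt.prod {σ ι : Type*} (s : Finset ι) (p : ι → MvPolynomial σ ℤ) (m : ι → σ →₀ ℕ)
    (h : ∀ i ∈ s, PosAt (p i) (m i)) : PosAt (∏ i ∈ s, p i) (∑ i ∈ s, m i) := by
  classical
  induction s using Finset.induction_on with
  | empty => simpa using PosAt.one
  | insert a s ha ih =>
    rw [Finset.prod_insert ha, Finset.sum_insert ha]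
    exact (h a (by simp)).mul (ih fun i hi => h i (by simp [hi]))

theorem PosAt.sum {σ ι : Type*} (s : Finset ι) (p : ι → MvPolynomial σ ℤ) (m : σ →₀ ℕ)
    (h : ∀ i ∈ s, ∃ m', PosAt (p i) m') {i : ι} (hi : i ∈ s) (hm : PosAt (p i) m) :
    PosAt (∑ i ∈ s, p i) m := by
  have h0 : ∀ j ∈ s, ∀ m', 0 ≤ coeff m' (p j) := fun j hj => (h j hj).choose_spec.1
  refine ⟨fun m' => ?_, ?_⟩
  · rw [coeff_sum]; exact Finset.sum_nonneg fun j hj => h0 j hj m'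
  · rw [coeff_sum]; exact Finset.sum_pos' (fun j hj => h0 j hj m) ⟨i, hi, hm.2⟩

theorem PosAt.var {σ : Type*} (u : σ) : PosAt (X u : MvPolynomial σ ℤ) (Finsupp.single u 1) := by
  classical
  refine ⟨fun m' => ?_, by simp⟩
  rw [coeff_X]; split_ifs <;> simp

theorem PosAt.linear {σ : Type*} (s : Finset σ) {u : σ} (hu : u ∈ s) :
    PosAt (∑ v ∈ s, (X v : MvPolynomial σ ℤ)) (Finsupp.single u 1) :=
  PosAt.sum s _ _ (fun v _ => ⟨_, PosAt.var v⟩) hu (PosAt.var u)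

theorem PosAt.pow_fin {σ : Type*} {p : MvPolynomial σ ℤ} (N : ℕ) (m : Fin N → σ →₀ ℕ)
    (h : ∀ r, PosAt p (m r)) : PosAt (p ^ N) (∑ r, m r) := by
  simpa using PosAt.prod Finset.univ (fun _ : Fin N => p) m fun r _ => h r

/-- The factor of `P` attached to a player `j` of the `i`-th clique contains every monomial of
degree `N - 1`, thanks to its summand `l = 0`. -/
theorem PosAt.clique_factor {σ : Type*} [Fintype σ] (i : σ) (N : ℕ) (hN : 1 ≤ N)
    (g : Fin (N - 1) → σ) :
    PosAt (∑ l ∈ Finset.range N, (X i : MvPolynomial σ ℤ) ^ l *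
      (∑ u, (X u : MvPolynomial σ ℤ)) ^ (N - 1 - l))
      (∑ r, Finsupp.single (g r) 1) := by
  refine PosAt.sum _ _ _ (fun l _ => ?_) (i := 0) (by simp; omega) ?_
  · exact ⟨_, (PosAt.pow_fin l (fun _ => Finsupp.single i 1) fun _ => PosAt.var i).mul
      (PosAt.pow_fin _ (fun _ => Finsupp.single i 1) fun _ =>
        PosAt.linear Finset.univ (Finset.mem_univ i))⟩
  · simpa using PosAt.pow_fin (N - 1) (fun r => Finsupp.single (g r) 1) fun r =>
      PosAt.linear Finset.univ (Finset.mem_univ (g r))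

theorem sum_pred_lt_prod {ι : Type*} (s : Finset ι) (e : ι → ℕ) (he : ∀ j ∈ s, 1 ≤ e j) :
    ∑ j ∈ s, (e j - 1) + 1 ≤ ∏ j ∈ s, e j := by
  classical
  induction s using Finset.induction_on with
  | empty => simp
  | insert a s ha ih =>
    rw [Finset.prod_insert ha, Finset.sum_insert ha]
    have h1 := ih fun j hj => he j (by simp [hj])
    obtain ⟨x, hx⟩ := Nat.exists_eq_add_of_le (he a (by simp))
    rw [hx, Nat.add_sub_cancel_left]
    nlinarith [Nat.mul_le_mul_left x h1, Nat.zero_le (x * (∑ j ∈ s, (e j - 1)))]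

theorem mem_span_X_pow_iff {σ : Type*} (D : σ → ℕ) (p : MvPolynomial σ ℤ) :
    p ∈ Ideal.span (Set.range fun i => (X i : MvPolynomial σ ℤ) ^ D i) ↔
      ∀ m ∈ p.support, ∃ i, D i ≤ m i := by
  classical
  have h : (Set.range fun i => (X i : MvPolynomial σ ℤ) ^ D i) =
      (fun s => monomial s (1 : ℤ)) '' Set.range fun i => Finsupp.single i (D i) := by
    rw [← Set.range_comp]
    congr 1
    funext i
    simp [X_pow_eq_monomial]
  rw [h, mem_ideal_span_monomial_image]
  simp

/-- A transportation problem: the items `p : ι` have origins `o p`, an item with origin `i ∈ 𝒮` may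
not be sent to `i`, and `u` accepts at most `c u` items. It is solvable once the total capacity
suffices for all items, and the capacity away from `i` suffices for the items of origin `i ∈ 𝒮`. -/
theorem exists_assignment {κ ι : Type*} [Fintype κ] [DecidableEq κ] [Fintype ι]
    (𝒮 : Finset κ) (o : ι → κ) (c : κ → ℕ)
    (htot : Fintype.card ι ≤ ∑ u, c u)
    (hone : ∀ i ∈ 𝒮, #{p | o p = i} ≤ ∑ u ∈ Finset.univ.erase i, c u) :
    ∃ g : ι → κ, (∀ p, o p ∈ 𝒮 → g p ≠ o p) ∧ ∀ u, #{p | g p = u} ≤ c u := by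
  classical
  -- Each `u` is split into `c u` slots; Hall's theorem places the items in distinct slots.
  let t : ι → Finset (Σ u, Fin (c u)) := fun p => {q | o p ∈ 𝒮 → q.1 ≠ o p}
  have hall : ∀ s : Finset ι, #s ≤ #(s.biUnion t) := by
    intro s
    by_cases hu : s.biUnion t = Finset.univ
    · rw [hu, Finset.card_univ, Fintype.card_sigma]
      simpa using (Finset.card_le_univ s).trans htot
    · obtain ⟨q, hq⟩ : ∃ q, q ∉ s.biUnion t := by
        by_contra! h
        exact hu (Finset.eq_univ_iff_forall.2 h)
      have hq' : ∀ p ∈ s, o p ∈ 𝒮 ∧ q.1 = o p := by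
        intro p hp
        by_contra hcon
        exact hq (Finset.mem_biUnion.2 ⟨p, hp, by simp only [t, Finset.mem_filter_univ]; tauto⟩)
      rcases s.eq_empty_or_nonempty with rfl | ⟨p, hp⟩
      · simp
      obtain ⟨hpS, hqp⟩ := hq' p hp
      calc #s ≤ #{p' | o p' = o p} := Finset.card_le_card fun p' hp' => by
            simp [← hqp, (hq' p' hp').2]
        _ ≤ ∑ u ∈ Finset.univ.erase (o p), c u := hone _ hpS
        _ = #((Finset.univ.erase (o p)).sigma fun u => (Finset.univ : Finset (Fin (c u)))) := by
            simp
        _ ≤ #(s.biUnion t) := Finset.card_le_card fun q' hq'' =>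
            Finset.mem_biUnion.2 ⟨p, hp, by
              simp only [t, Finset.mem_filter_univ]
              intro _
              simpa using hq''⟩
  obtain ⟨f, hf, hft⟩ := (Finset.all_card_le_biUnion_card_iff_exists_injective t).1 hall
  refine ⟨fun p => (f p).1, fun p hp => ?_, fun u => ?_⟩
  · have := hft p
    simp only [t, Finset.mem_filter_univ] at this
    exact this hp
  · calc #{p | (f p).1 = u}
        ≤ #(({u} : Finset κ).sigma fun u => (Finset.univ : Finset (Fin (c u)))) :=
          Finset.card_le_card_of_injOn f (fun p hp => by simpa using hp) hf.injOn
      _ = c u := by simp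

/-- Every monomial of `(∑_{u ≠ i} x_u)^N` has degree `N` and does not involve `x_i`, so one of its
exponents exceeds the corresponding bound when `∑_{u ≠ i} (D_u - 1) < N`. -/
theorem erase_pow_mem {σ : Type*} [Fintype σ] [DecidableEq σ] (D : σ → ℕ)
    (i : σ) (N : ℕ) (hN : ∑ u ∈ Finset.univ.erase i, (D u - 1) < N) :
    (∑ u ∈ Finset.univ.erase i, (X u : MvPolynomial σ ℤ)) ^ N ∈
      Ideal.span (Set.range fun i => (X i : MvPolynomial σ ℤ) ^ D i) := by
  rw [mem_span_X_pow_iff]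
  intro m hm
  by_contra! hcon
  have hhom : ((∑ u ∈ Finset.univ.erase i, (X u : MvPolynomial σ ℤ)) ^ N).IsHomogeneous (1 * N) :=
    (IsHomogeneous.sum _ _ _ fun u _ => isHomogeneous_X _ u).pow N
  have hdeg : ∑ u, m u = N := by
    have := hhom (mem_support_iff.1 hm)
    simpa [Finsupp.weight_apply, Finsupp.sum_fintype] using this
  have hi : m i = 0 := by
    have h1 : degreeOf i (∑ u ∈ Finset.univ.erase i, (X u : MvPolynomial σ ℤ)) ≤ 0 :=
      (degreeOf_sum_le _ _ _).trans (Finset.sup_le fun u hu => by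
        simp [degreeOf_X, (Finset.ne_of_mem_erase hu).symm])
    have h2 := degreeOf_pow_le i (∑ u ∈ Finset.univ.erase i, (X u : MvPolynomial σ ℤ)) N
    have h3 := monomial_le_degreeOf i hm
    have h4 := Nat.mul_le_mul_left N h1
    omega
  rw [← Finset.add_sum_erase _ _ (Finset.mem_univ i), hi] at hdeg
  have : ∑ u ∈ Finset.univ.erase i, m u ≤ ∑ u ∈ Finset.univ.erase i, (D u - 1) :=
    Finset.sum_le_sum fun u _ => Nat.le_sub_one_of_lt (hcon u)
  omega

/-- Emptiness criterion for generic Nash CI varieties, in its algebraic form: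
the Chow class polynomial `P` of the Nash CI variety of a cluster graph does not lie
in the ideal `⟨x_1^{D_1}, …, x_k^{D_k}⟩` of `ℤ[x_1, …, x_k]` (i.e. its class in the
Chow ring of `ℙ^{D_1-1} × ⋯ × ℙ^{D_k-1}` is nonzero) if and only if
`2(d_i - 1) ≤ ∑_{l=1}^k (D_l - 1)` for every isolated vertex `i ∈ 𝒮`. -/
theorem nash_ci_class_not_mem_ideal_iff (k : ℕ) (hk : 1 ≤ k) (𝒮 : Finset (Fin k))
    (d : Fin k → ℕ) (n : Fin k → ℕ) (dd : Fin k → ℕ → ℕ)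
    (hd : ∀ i ∈ 𝒮, 1 ≤ d i)
    (hn1 : ∀ i ∈ 𝒮, n i = 1)
    (hn2 : ∀ i ∉ 𝒮, 2 ≤ n i)
    (hdd : ∀ i ∉ 𝒮, ∀ j < n i, 1 ≤ dd i j) :
    let D : Fin k → ℕ := fun i =>
      if i ∈ 𝒮 then d i else ∏ j ∈ Finset.range (n i), dd i j
    let P : MvPolynomial (Fin k) ℤ :=
      (∏ i ∈ 𝒮, (∑ u ∈ Finset.univ.erase i, X u) ^ (d i - 1)) *
        ∏ i ∈ 𝒮ᶜ, ∏ j ∈ Finset.range (n i),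
          ∑ l ∈ Finset.range (dd i j),
            (X i) ^ l * (∑ u, (X u : MvPolynomial (Fin k) ℤ)) ^ (dd i j - 1 - l)
    (P ∉ Ideal.span (Set.range fun i : Fin k =>
        (X i : MvPolynomial (Fin k) ℤ) ^ D i)) ↔
      ∀ i ∈ 𝒮, 2 * (d i - 1) ≤ ∑ l, (D l - 1) := by
  intro D P
  -- On `𝒮` the single strategy number `d i` is treated as a list of length `n i = 1`.
  let e : Fin k → ℕ → ℕ := fun i j => if i ∈ 𝒮 then d i else dd i j
  have he : ∀ i, ∀ j < n i, 1 ≤ e i j := by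
    intro i j hj
    by_cases hi : i ∈ 𝒮
    · simpa [e, hi] using hd i hi
    · simpa [e, hi] using hdd i hi j hj
  have hDe : ∀ i, D i = ∏ j ∈ Finset.range (n i), e i j := by
    intro i
    by_cases hi : i ∈ 𝒮
    · simp [D, e, hi, hn1 i hi]
    · simp [D, e, hi]
  have hD : ∀ i, ∑ j ∈ Finset.range (n i), (e i j - 1) + 1 ≤ D i := fun i => by
    rw [hDe]
    exact sum_pred_lt_prod _ _ fun j hj => he i j (Finset.mem_range.1 hj)
  have hsplit : ∀ i, (D i - 1) + ∑ u ∈ Finset.univ.erase i, (D u - 1) = ∑ u, (D u - 1) := fun i =>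
    Finset.add_sum_erase _ (fun u => D u - 1) (Finset.mem_univ i)
  have hDS : ∀ i ∈ 𝒮, D i = d i := fun i hi => by simp [D, hi]
  constructor
  · intro hP i hi
    by_contra! hcon
    refine hP (Ideal.mul_mem_right _ _ ?_)
    rw [← Finset.mul_prod_erase _ _ hi]
    refine Ideal.mul_mem_right _ _ (erase_pow_mem D i _ ?_)
    have := hsplit i
    rw [hDS i hi] at this
    omega
  · intro hineq
    rw [mem_span_X_pow_iff]
    -- One item for each linear form in the product, grouped by vertex.
    let ι := Σ i : Fin k, Σ j : Fin (n i), Fin (e i j - 1)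
    have hfib : ∀ i, Fintype.card (Σ j : Fin (n i), Fin (e i j - 1)) =
        ∑ j ∈ Finset.range (n i), (e i j - 1) := fun i => by
      rw [Fintype.card_sigma, Finset.sum_range]
      simp
    obtain ⟨g, hg, hgc⟩ := exists_assignment (ι := ι) 𝒮 (fun p => p.1) (fun u => D u - 1)
      (by
        rw [Fintype.card_sigma]
        refine Finset.sum_le_sum fun i _ => ?_
        have := hD i
        rw [hfib]
        omega)
      (by
        intro i hi
        have h1 : #{p : ι | p.1 = i} ≤ Fintype.card (Σ j : Fin (n i), Fin (e i j - 1)) := by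
          calc #{p : ι | p.1 = i} ≤ #(({i} : Finset (Fin k)).sigma fun i =>
                (Finset.univ : Finset (Σ j : Fin (n i), Fin (e i j - 1)))) :=
                Finset.card_le_card fun p hp =>
                  Finset.mem_sigma.2 ⟨by simpa using hp, Finset.mem_univ _⟩
            _ = _ := by rw [Finset.card_sigma, Finset.sum_singleton, Finset.card_univ]
        have h2 := hD i
        have h3 := hsplit i
        have h4 := hineq i hi
        rw [hfib] at h1
        rw [hDS i hi] at h2 h3
        omega)
    let M : Fin k → (Fin k →₀ ℕ) := fun i =>
      ∑ j : Fin (n i), ∑ r : Fin (e i j - 1), Finsupp.single (g ⟨i, j, r⟩) 1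
    have hpos : PosAt P (∑ i ∈ 𝒮, M i + ∑ i ∈ 𝒮ᶜ, M i) := by
      refine PosAt.mul (PosAt.prod _ _ _ fun i hi => ?_) (PosAt.prod _ _ _ fun i hi => ?_)
      · have h1 : (∑ u ∈ Finset.univ.erase i, (X u : MvPolynomial (Fin k) ℤ)) ^ (d i - 1) =
            ∏ j : Fin (n i), (∑ u ∈ Finset.univ.erase i, X u) ^ (e i j - 1) := by
          simp [e, hi, hn1 i hi]
        rw [h1]
        exact PosAt.prod _ _ _ fun j _ => PosAt.pow_fin _ _ fun r =>
          PosAt.linear _ (Finset.mem_erase.2 ⟨hg ⟨i, j, r⟩ hi, Finset.mem_univ _⟩)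
      · have hi' : i ∉ 𝒮 := Finset.mem_compl.1 hi
        have h1 : ∀ j, dd i j = e i j := fun j => by simp [e, hi']
        simp only [h1]
        rw [Finset.prod_range]
        exact PosAt.prod _ _ _ fun j _ => PosAt.clique_factor i _ (he i j j.2) _
    intro hcon
    obtain ⟨u, hu⟩ := hcon _ (mem_support_iff.2 hpos.2.ne')
    have hM : (∑ i ∈ 𝒮, M i + ∑ i ∈ 𝒮ᶜ, M i) u = #{p : ι | g p = u} := by
      rw [Finset.sum_add_sum_compl, Finset.card_filter, Fintype.sum_sigma]
      simp only [Fintype.sum_sigma, M, Finsupp.finsetSum_apply, Finsupp.single_apply]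
    rw [hM] at hu
    have h1 := hgc u
    have h2 := hD u
    omega
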